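/- Fix d ≥ 3 and a root α in R^d. Let E = {(x,y) ∈ R^d × R^d : ⟨α,x⟩·⟨α,y⟩ > 0}. Define T(x,y) = (|x-y|^{-d} - |x - σ_α y|^{-d}) / (⟨α,x⟩·⟨α,y⟩) on E. Then there exist constants 0 < c₁ ≤ c₂ (depending only on d and |α|) such that c₁/(|x-y|^d·|x - σ_α y|²) ≤ T(x,y) ≤ c₂/(|x-y|^d·|x - σ_α y|²) for all (x,y) ∈ E with x ≠ y. -/

import Mathlib

local notation "⟪" x ", " y "⟫" => @inner ℝ _ _ x y

theorem norm_sub_reflection_sq {E : Type*} [NormedAddCommGroup E] [InnerProductSpace ℝ E]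
    {α : E} (hα : α ≠ 0) (x y : E) :
    ‖x - (y - (2 * inner ℝ α y / ‖α‖ ^ 2) • α)‖ ^ 2 =
      ‖x - y‖ ^ 2 + 4 / ‖α‖ ^ 2 * (inner ℝ α x * inner ℝ α y) := by
  have hn : ‖α‖ ≠ 0 := norm_ne_zero_iff.mpr hα
  rw [← sub_add, norm_add_sq_real, inner_smul_right, norm_smul, mul_pow, Real.norm_eq_abs,
    sq_abs, inner_sub_left, real_inner_comm α x, real_inner_comm α y]
  field_simp
  ring

theorem pow_mul_sq_sub_sq_le_pow_sub_pow {a b : ℝ} (ha : 0 ≤ a) (hab : a ≤ b) (n : ℕ) :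
    b ^ n * (b ^ 2 - a ^ 2) ≤ b ^ (n + 2) - a ^ (n + 2) := by
  have h : a ^ n * a ^ 2 ≤ b ^ n * a ^ 2 := by gcongr
  rw [pow_add, pow_add]
  linarith

theorem pow_sub_pow_le_mul_pow_mul_sq_sub_sq {a b : ℝ} (ha : 0 ≤ a) (hab : a ≤ b) (n : ℕ) :
    b ^ (n + 2) - a ^ (n + 2) ≤ ((n + 2 : ℕ) : ℝ) * (b ^ n * (b ^ 2 - a ^ 2)) := by
  have hb : 0 ≤ b := ha.trans hab
  induction n with
  | zero =>
    have : a ^ 2 ≤ b ^ 2 := by gcongr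
    norm_num
    linarith
  | succ n ih =>
    have h₁ : b * (b ^ (n + 2) - a ^ (n + 2)) ≤
        b * (((n + 2 : ℕ) : ℝ) * (b ^ n * (b ^ 2 - a ^ 2))) := by gcongr
    have h₂ : a ^ (n + 1) * (a * (b - a)) ≤ b ^ (n + 1) * (b ^ 2 - a ^ 2) := by
      have : 0 ≤ b - a := sub_nonneg.mpr hab
      gcongr
      nlinarith [mul_nonneg hb this]
    push_cast at h₁ ⊢
    ring_nf at h₁ h₂ ⊢
    linarith

/-- Fix `d ≥ 3` and a root `α ≠ 0` in `ℝ^d`. On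
`E = {(x,y) : ⟪α,x⟫·⟪α,y⟫ > 0}`, the quantity
`T(x,y) = (|x-y|^{-d} - |x - σ_α y|^{-d}) / (⟪α,x⟫·⟪α,y⟫)` satisfies
`T(x,y) ≍ 1/(|x-y|^d·|x - σ_α y|²)` with constants depending only on `d` and `|α|`. -/
theorem stmt_13 {d : ℕ} (hd : 3 ≤ d) (α : EuclideanSpace ℝ (Fin d)) (hα : α ≠ 0) :
    ∃ c₁ c₂ : ℝ, 0 < c₁ ∧ c₁ ≤ c₂ ∧
      ∀ x y : EuclideanSpace ℝ (Fin d),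
        0 < ⟪α, x⟫ * ⟪α, y⟫ → x ≠ y →
        c₁ / (‖x - y‖ ^ d * ‖x - (y - (2 * ⟪α, y⟫ / ‖α‖ ^ 2) • α)‖ ^ 2)
            ≤ (1 / ‖x - y‖ ^ d - 1 / ‖x - (y - (2 * ⟪α, y⟫ / ‖α‖ ^ 2) • α)‖ ^ d)
                / (⟪α, x⟫ * ⟪α, y⟫) ∧
        (1 / ‖x - y‖ ^ d - 1 / ‖x - (y - (2 * ⟪α, y⟫ / ‖α‖ ^ 2) • α)‖ ^ d)
                / (⟪α, x⟫ * ⟪α, y⟫)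
            ≤ c₂ / (‖x - y‖ ^ d * ‖x - (y - (2 * ⟪α, y⟫ / ‖α‖ ^ 2) • α)‖ ^ 2) := by
  have hn : 0 < ‖α‖ := norm_pos_iff.mpr hα
  obtain ⟨n, rfl⟩ : ∃ n, d = n + 2 := ⟨d - 2, by lia⟩
  have hK : 0 < 4 / ‖α‖ ^ 2 := by positivity
  refine ⟨4 / ‖α‖ ^ 2, ((n + 2 : ℕ) : ℝ) * (4 / ‖α‖ ^ 2), hK, ?_, fun x y hp hxy => ?_⟩
  · exact le_mul_of_one_le_left hK.le (by exact_mod_cast (by lia : 1 ≤ n + 2))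
  have hsq := norm_sub_reflection_sq hα x y
  have ha : 0 < ‖x - y‖ := norm_pos_iff.mpr (sub_ne_zero.mpr hxy)
  have hb₀ := norm_nonneg (x - (y - (2 * ⟪α, y⟫ / ‖α‖ ^ 2) • α))
  generalize ‖x - (y - (2 * ⟪α, y⟫ / ‖α‖ ^ 2) • α)‖ = b at *
  generalize ‖x - y‖ = a at *
  generalize ⟪α, x⟫ * ⟪α, y⟫ = p at *
  generalize 4 / ‖α‖ ^ 2 = K at *
  have hab : a ≤ b := by
    refine le_of_sq_le_sq ?_ hb₀
    nlinarith [mul_pos hK hp]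
  have hb : 0 < b := ha.trans_le hab
  have hlow := pow_mul_sq_sub_sq_le_pow_sub_pow ha.le hab n
  have hupp := pow_sub_pow_le_mul_pow_mul_sq_sub_sq ha.le hab n
  have hKp : b ^ 2 - a ^ 2 = K * p := by linarith
  rw [hKp] at hlow hupp
  have hT : (1 / a ^ (n + 2) - 1 / b ^ (n + 2)) / p =
      (b ^ (n + 2) - a ^ (n + 2)) / (b ^ n * p) / (a ^ (n + 2) * b ^ 2) := by
    field_simp
    ring
  rw [hT]
  constructor
  · gcongr
    rw [le_div_iff₀ (by positivity)]
    linarith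
  · gcongr
    rw [div_le_iff₀ (by positivity)]
    linarith
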